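/- Let s ≥ 1, let 0 ≤ q ≤ s, and set n = T_s + q. Then Δ_n = s(s−1) + ⌊√(4q+1)⌋ − 1. -/

import Mathlib

/-!
Split a partition of `n` into the set `S` of its part sizes and the multiset `M ⊆ S` of surplus
copies. With `r`, `a`, `b` its support, gap bonus and multiplicity bonus, `T r + T a + T b ≤ n`:
the surplus copies have `b` distinct sizes, so sum at least `T b`, and `S` has sum at least
`T r + T a`, by induction on its largest element `m`, using that `m ≥ r + a` because the `r` sizes
and the `a` missing predecessors are distinct elements of `[1, m]`. Conversely, for `a < r` and
`a + b ≤ r`, any such `n` has a partition of degree at least `r (r - 1) + a + b`, built on the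
sizes `1, …, r - a, r - a + 2, r - a + 4, …, r + a`.

For `n = T s + q` with `q ≤ s`, a support below `s` gives degree at most `s (s - 1)`, so the
problem is to maximize `a + b` subject to `T a + T b ≤ q`. By the identity
`(a + b + 1) ^ 2 + (a - b) ^ 2 = 4 (T a + T b) + 1` this forces `(a + b + 1) ^ 2 ≤ 4 q + 1`, and
every value of `a + b` allowed by that bound is attained with `|a - b| ≤ 1`.
-/

namespace PartitionDegree

/-- The `m`-th triangular number. -/
def T (m : ℕ) : ℕ := m * (m + 1) / 2

/-- The number of distinct part sizes of a partition. -/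
def supp {n : ℕ} (lam : n.Partition) : ℕ := lam.parts.toFinset.card

/-- The gap-bonus count: distinct part sizes `L ≥ 2` such that `L - 1` is not a part size. -/
def gapBonus {n : ℕ} (lam : n.Partition) : ℕ :=
  (lam.parts.toFinset.filter (fun L => 2 ≤ L ∧ (L - 1) ∉ lam.parts)).card

/-- The multiplicity-bonus count: distinct part sizes occurring with multiplicity at least 2. -/
def multBonus {n : ℕ} (lam : n.Partition) : ℕ :=
  (lam.parts.toFinset.filter (fun L => 2 ≤ lam.parts.count L)).card

/-- The degree of a partition in the partition graph. -/
def deg {n : ℕ} (lam : n.Partition) : ℕ :=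
  supp lam * (supp lam - 1) + gapBonus lam + multBonus lam

/-- The maximal degree over all partitions of `n`. -/
def maxDeg (n : ℕ) : ℕ := Finset.univ.sup (fun lam : n.Partition => deg lam)

/-- `ρ(q)`: the maximum of `a + b` over pairs with `T a + T b ≤ q`. -/
noncomputable def rho (q : ℕ) : ℕ := sSup {c : ℕ | ∃ a b : ℕ, c = a + b ∧ T a + T b ≤ q}

/-- `mu` is the conjugate of `lam`: for each `k ≥ 1`, the multiplicity of `k` in `mu`
equals (number of parts of `lam` that are `≥ k`) minus (number of parts `≥ k + 1`). -/
def IsConjugate {n : ℕ} (lam mu : n.Partition) : Prop :=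
  ∀ k : ℕ, 1 ≤ k →
    mu.parts.count k =
      Multiset.countP (fun p => k ≤ p) lam.parts -
        Multiset.countP (fun p => k + 1 ≤ p) lam.parts

lemma two_mul_T (m : ℕ) : 2 * T m = m * (m + 1) :=
  Nat.mul_div_cancel' (Nat.even_mul_succ_self m).two_dvd

lemma T_succ (m : ℕ) : T (m + 1) = T m + (m + 1) := by
  linarith [two_mul_T m, two_mul_T (m + 1)]

lemma T_mono : Monotone T :=
  monotone_nat_of_le_succ fun m => by rw [T_succ]; exact Nat.le_add_right _ _

lemma le_T (m : ℕ) : m ≤ T m := by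
  cases m with
  | zero => exact Nat.zero_le _
  | succ m => rw [T_succ]; exact Nat.le_add_left _ _

lemma T_le_T_add_self {a b : ℕ} (h : a ≤ b + 1) : T a ≤ T b + a := by
  cases a with
  | zero => exact Nat.zero_le _
  | succ a => rw [T_succ]; gcongr; exact T_mono (Nat.le_of_succ_le_succ h)

lemma sum_Icc_one_eq_T (m : ℕ) : ∑ x ∈ Finset.Icc 1 m, x = T m := by
  induction m with
  | zero => rfl
  | succ m ih => rw [Finset.sum_Icc_succ_top (Nat.le_add_left 1 m), ih, T_succ]

lemma add_add_one_sq_add_sub_sq (a b : ℕ) :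
    ((a : ℤ) + b + 1) ^ 2 + ((a : ℤ) - b) ^ 2 = 4 * (T a + T b) + 1 := by
  have ha : 2 * (T a : ℤ) = a * (a + 1) := mod_cast two_mul_T a
  have hb : 2 * (T b : ℤ) = b * (b + 1) := mod_cast two_mul_T b
  linear_combination -2 * ha - 2 * hb

lemma add_le_sqrt_sub_one {a b q : ℕ} (h : T a + T b ≤ q) :
    a + b ≤ Nat.sqrt (4 * q + 1) - 1 := by
  refine Nat.le_sub_one_of_lt (Nat.le_sqrt'.2 ?_)
  zify at h ⊢
  linarith [add_add_one_sq_add_sub_sq a b, sq_nonneg ((a : ℤ) - b)]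

lemma exists_add_eq_sqrt_sub_one (q : ℕ) :
    ∃ a b : ℕ, a ≤ b ∧ a + b = Nat.sqrt (4 * q + 1) - 1 ∧ T a + T b ≤ q := by
  obtain ⟨c, hc⟩ : ∃ c, Nat.sqrt (4 * q + 1) = c + 1 :=
    Nat.exists_eq_add_one.2 (Nat.sqrt_pos.2 (Nat.succ_pos _))
  obtain ⟨a, b, rfl, hab, hba⟩ : ∃ a b, c = a + b ∧ a ≤ b ∧ b ≤ a + 1 :=
    ⟨c / 2, c - c / 2, by omega, by omega, by omega⟩
  refine ⟨a, b, hab, by rw [hc, Nat.add_sub_cancel], ?_⟩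
  have hsq : ((a : ℤ) + b + 1) ^ 2 ≤ 4 * q + 1 := mod_cast hc ▸ Nat.sqrt_le' (4 * q + 1)
  have hdiff : ((a : ℤ) - b) ^ 2 ≤ 1 := by
    rw [sq_le_one_iff_abs_le_one, abs_le]
    omega
  have := add_add_one_sq_add_sub_sq a b
  omega

lemma rho_eq_sqrt_sub_one (q : ℕ) : rho q = Nat.sqrt (4 * q + 1) - 1 := by
  have hgreatest : IsGreatest {c : ℕ | ∃ a b : ℕ, c = a + b ∧ T a + T b ≤ q}
      (Nat.sqrt (4 * q + 1) - 1) := by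
    constructor
    · obtain ⟨a, b, -, hsum, hq⟩ := exists_add_eq_sqrt_sub_one q
      exact ⟨a, b, hsum.symm, hq⟩
    · rintro _ ⟨a, b, rfl, hq⟩
      exact add_le_sqrt_sub_one hq
  exact hgreatest.csSup_eq

lemma add_le_rho {a b q : ℕ} (h : T a + T b ≤ q) : a + b ≤ rho q :=
  (add_le_sqrt_sub_one h).trans_eq (rho_eq_sqrt_sub_one q).symm

lemma exists_add_eq_rho (q : ℕ) : ∃ a b : ℕ, a ≤ b ∧ a + b = rho q ∧ T a + T b ≤ q := by
  rw [rho_eq_sqrt_sub_one]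
  exact exists_add_eq_sqrt_sub_one q

/-- The elements of `S` that are at least `2` and whose predecessor is missing from `S`: the sizes
counted by the gap bonus of a partition whose set of part sizes is `S`. -/
def gaps (S : Finset ℕ) : Finset ℕ := S.filter (fun L => 2 ≤ L ∧ L - 1 ∉ S)

lemma mem_gaps {S : Finset ℕ} {x : ℕ} : x ∈ gaps S ↔ x ∈ S ∧ 2 ≤ x ∧ x - 1 ∉ S :=
  Finset.mem_filter

lemma card_gaps_insert_le (x : ℕ) (S : Finset ℕ) :
    (gaps (insert x S)).card ≤ (gaps S).card + 1 := by
  have hsub : gaps (insert x S) ⊆ insert x (gaps S) := by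
    intro y hy
    simp only [mem_gaps, Finset.mem_insert] at hy ⊢
    tauto
  exact (Finset.card_le_card hsub).trans (Finset.card_insert_le _ _)

lemma card_add_card_gaps_le {S : Finset ℕ} {m : ℕ} (hS : S ⊆ Finset.Icc 1 m) :
    S.card + (gaps S).card ≤ m := by
  have hinj : Set.InjOn (fun L : ℕ => L - 1) (gaps S) := by
    intro x hx y hy hxy
    have hx2 := (mem_gaps.1 hx).2.1
    have hy2 := (mem_gaps.1 hy).2.1
    dsimp only at hxy
    omega
  have hdisj : Disjoint S ((gaps S).image fun L => L - 1) := by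
    simp only [Finset.disjoint_right, Finset.forall_mem_image]
    exact fun x hx => (mem_gaps.1 hx).2.2
  have hsub : S ∪ (gaps S).image (fun L => L - 1) ⊆ Finset.Icc 1 m := by
    refine Finset.union_subset hS (Finset.image_subset_iff.2 fun x hx => ?_)
    obtain ⟨hxS, hx2, -⟩ := mem_gaps.1 hx
    have hxm := (Finset.mem_Icc.1 (hS hxS)).2
    exact Finset.mem_Icc.2 ⟨by omega, by omega⟩
  calc S.card + (gaps S).card
      = (S ∪ (gaps S).image fun L => L - 1).card := by
        rw [Finset.card_union_of_disjoint hdisj, Finset.card_image_of_injOn hinj]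
    _ ≤ (Finset.Icc 1 m).card := Finset.card_le_card hsub
    _ = m := Nat.card_Icc 1 m

lemma T_card_add_T_card_gaps_le_sum {S : Finset ℕ} (hS : 0 ∉ S) :
    T S.card + T (gaps S).card ≤ ∑ x ∈ S, x := by
  induction S using Finset.induction_on_max with
  | empty => rfl
  | insert m S hlt ih =>
    have hm : m ∉ S := fun h => lt_irrefl m (hlt m h)
    have hsub : insert m S ⊆ Finset.Icc 1 m := fun x hx => Finset.mem_Icc.2
      ⟨Nat.one_le_iff_ne_zero.2 (ne_of_mem_of_not_mem hx hS),
        (Finset.mem_insert.1 hx).elim Eq.le fun h => (hlt x h).le⟩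
    have hmax : S.card + 1 + (gaps (insert m S)).card ≤ m :=
      Finset.card_insert_of_notMem hm ▸ card_add_card_gaps_le hsub
    have hT := T_le_T_add_self (card_gaps_insert_le m S)
    have hsum := ih fun h => hS (Finset.mem_insert_of_mem h)
    rw [Finset.sum_insert hm, Finset.card_insert_of_notMem hm, T_succ]
    linarith

lemma T_card_toFinset_le_sum {M : Multiset ℕ} (hM : 0 ∉ M) : T M.toFinset.card ≤ M.sum :=
  calc T M.toFinset.card
      ≤ ∑ x ∈ M.toFinset, x :=
        (Nat.le_add_right _ _).trans
          (T_card_add_T_card_gaps_le_sum (mt Multiset.mem_toFinset.1 hM))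
    _ = M.dedup.sum := (Finset.sum_val M.toFinset).symm
    _ ≤ M.dedup.sum + (M - M.dedup).sum := Nat.le_add_right _ _
    _ = M.sum := by rw [← Multiset.sum_add, add_tsub_cancel_of_le (Multiset.dedup_le M)]

lemma exists_parts_eq_val_add {n : ℕ} (lam : n.Partition) :
    ∃ (S : Finset ℕ) (M : Multiset ℕ), M ⊆ S.val ∧ lam.parts = S.val + M :=
  ⟨lam.parts.toFinset, lam.parts - lam.parts.dedup,
    fun _ hx => Multiset.mem_dedup.2 (Multiset.mem_of_le tsub_le_self hx),
    (add_tsub_cancel_of_le (Multiset.dedup_le lam.parts)).symm⟩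

section Surplus

variable {n : ℕ} {lam : n.Partition} {S : Finset ℕ} {M : Multiset ℕ}

lemma toFinset_parts_eq (hM : M ⊆ S.val) (hlam : lam.parts = S.val + M) :
    lam.parts.toFinset = S := by
  ext x
  rw [hlam, Multiset.mem_toFinset, Multiset.mem_add, Finset.mem_val]
  exact or_iff_left_of_imp fun hx => hM hx

lemma supp_eq_card (hM : M ⊆ S.val) (hlam : lam.parts = S.val + M) : supp lam = S.card := by
  rw [supp, toFinset_parts_eq hM hlam]

lemma gapBonus_eq_card_gaps (hM : M ⊆ S.val) (hlam : lam.parts = S.val + M) :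
    gapBonus lam = (gaps S).card := by
  simp only [gapBonus, gaps, ← Multiset.mem_toFinset, toFinset_parts_eq hM hlam]

lemma multBonus_eq_card_toFinset (hM : M ⊆ S.val) (hlam : lam.parts = S.val + M) :
    multBonus lam = M.toFinset.card := by
  rw [multBonus, toFinset_parts_eq hM hlam]
  congr 1
  ext x
  have hcount : x ∈ S → lam.parts.count x = 1 + M.count x := fun hx => by
    rw [hlam, Multiset.count_add, Multiset.count_eq_one_of_mem S.nodup hx]
  rw [Finset.mem_filter, Multiset.mem_toFinset, ← Multiset.one_le_count_iff_mem]
  constructor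
  · rintro ⟨hxS, hx2⟩
    rw [hcount hxS] at hx2
    omega
  · intro hx
    have hxS : x ∈ S := hM (Multiset.one_le_count_iff_mem.1 hx)
    exact ⟨hxS, by rw [hcount hxS]; omega⟩

end Surplus

lemma T_supp_add_T_gapBonus_add_T_multBonus_le {n : ℕ} (lam : n.Partition) :
    T (supp lam) + T (gapBonus lam) + T (multBonus lam) ≤ n := by
  obtain ⟨S, M, hM, hlam⟩ := exists_parts_eq_val_add lam
  have h0 : 0 ∉ S.val + M := fun h => (lam.parts_pos (hlam ▸ h)).false
  rw [Multiset.mem_add, not_or] at h0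
  rw [supp_eq_card hM hlam, gapBonus_eq_card_gaps hM hlam, multBonus_eq_card_toFinset hM hlam]
  calc T S.card + T (gaps S).card + T M.toFinset.card
      ≤ ∑ x ∈ S, x + M.sum :=
        add_le_add (T_card_add_T_card_gaps_le_sum h0.1) (T_card_toFinset_le_sum h0.2)
    _ = lam.parts.sum := by rw [hlam, Multiset.sum_add, Finset.sum_val]; rfl
    _ = n := lam.parts_sum

lemma mul_pred_add_add_le {s q r a b : ℕ} (hqs : q ≤ s) (har : a ≤ r) (hbr : b ≤ r)
    (h : T r + T a + T b ≤ T s + q) : r * (r - 1) + a + b ≤ s * (s - 1) + rho q := by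
  have hrs : r ≤ s := by
    by_contra! hlt
    have hT : T (s + 1) ≤ T r := T_mono hlt
    rw [T_succ] at hT
    omega
  rcases hrs.eq_or_lt with rfl | hlt
  · have hab : a + b ≤ rho q := add_le_rho (by omega)
    omega
  · calc r * (r - 1) + a + b
        ≤ r * (r - 1) + 2 * r := by omega
      _ = (r + 1) * r := by cases r <;> grind
      _ ≤ s * (s - 1) := Nat.mul_le_mul hlt (Nat.le_sub_one_of_lt hlt)
      _ ≤ s * (s - 1) + rho q := Nat.le_add_right _ _

lemma deg_le {s q : ℕ} (hqs : q ≤ s) (lam : (T s + q).Partition) :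
    deg lam ≤ s * (s - 1) + rho q :=
  mul_pred_add_add_le hqs (Finset.card_filter_le _ _) (Finset.card_filter_le _ _)
    (T_supp_add_T_gapBonus_add_T_multBonus_le lam)

lemma le_maxDeg_of_sum_add_sum_eq {n : ℕ} {S : Finset ℕ} {M : Multiset ℕ} (hS : 0 ∉ S)
    (hM : M ⊆ S.val) (hn : ∑ x ∈ S, x + M.sum = n) :
    S.card * (S.card - 1) + (gaps S).card + M.toFinset.card ≤ maxDeg n := by
  let lam : n.Partition :=
    { parts := S.val + M
      parts_pos := fun {x} hx => by
        have hxS : x ∈ S := (Multiset.mem_add.1 hx).elim id fun h => hM h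
        exact Nat.pos_of_ne_zero (ne_of_mem_of_not_mem hxS hS)
      parts_sum := by rw [Multiset.sum_add, Finset.sum_val]; exact hn }
  have hdeg : deg lam = S.card * (S.card - 1) + (gaps S).card + M.toFinset.card := by
    rw [deg, supp_eq_card hM rfl, gapBonus_eq_card_gaps hM rfl, multBonus_eq_card_toFinset hM rfl]
  exact hdeg ▸ Finset.le_sup (f := fun lam : n.Partition => deg lam) (Finset.mem_univ lam)

/-- The set `{1, …, k} ∪ {k + 2, k + 4, …, k + 2 * a}`, which has the least sum among the sets of
`k + a` positive integers with `a` gaps. -/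
def gappedInterval (k a : ℕ) : Finset ℕ :=
  Finset.Icc 1 k ∪ (Finset.Icc 1 a).image (fun j => k + 2 * j)

lemma mem_gappedInterval {k a x : ℕ} :
    x ∈ gappedInterval k a ↔ (1 ≤ x ∧ x ≤ k) ∨ ∃ j, (1 ≤ j ∧ j ≤ a) ∧ k + 2 * j = x := by
  simp only [gappedInterval, Finset.mem_union, Finset.mem_image, Finset.mem_Icc]

section GappedInterval

variable (k a : ℕ)

lemma zero_notMem_gappedInterval : 0 ∉ gappedInterval k a := by
  rw [mem_gappedInterval]
  omega

lemma add_two_mul_injective : Function.Injective fun j : ℕ => k + 2 * j := fun i j hij => by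
  dsimp only at hij
  omega

lemma disjoint_Icc_image_add_two_mul :
    Disjoint (Finset.Icc 1 k) ((Finset.Icc 1 a).image fun j => k + 2 * j) := by
  simp only [Finset.disjoint_right, Finset.forall_mem_image, Finset.mem_Icc]
  omega

lemma card_gappedInterval : (gappedInterval k a).card = k + a := by
  rw [gappedInterval, Finset.card_union_of_disjoint (disjoint_Icc_image_add_two_mul k a),
    Finset.card_image_of_injective _ (add_two_mul_injective k), Nat.card_Icc,
    Nat.card_Icc, Nat.add_sub_cancel, Nat.add_sub_cancel]

lemma sum_gappedInterval : ∑ x ∈ gappedInterval k a, x = T (k + a) + T a := by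
  rw [gappedInterval, Finset.sum_union (disjoint_Icc_image_add_two_mul k a),
    Finset.sum_image (add_two_mul_injective k).injOn, Finset.sum_add_distrib, ← Finset.mul_sum,
    sum_Icc_one_eq_T, sum_Icc_one_eq_T, Finset.sum_const, Nat.card_Icc,
    Nat.add_sub_cancel, smul_eq_mul]
  linarith [two_mul_T k, two_mul_T a, two_mul_T (k + a)]

lemma gaps_gappedInterval :
    gaps (gappedInterval k a) = (Finset.Icc 1 a).image (fun j => k + 2 * j) := by
  ext x
  simp only [mem_gaps, mem_gappedInterval, Finset.mem_image, Finset.mem_Icc]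
  constructor
  · rintro ⟨hx | hx, hx2, hpred⟩
    · exact absurd (Or.inl ⟨by omega, by omega⟩) hpred
    · exact hx
  · rintro ⟨j, hj, rfl⟩
    refine ⟨Or.inr ⟨j, hj, rfl⟩, by omega, ?_⟩
    rintro (h | ⟨i, -, h⟩) <;> omega

lemma card_gaps_gappedInterval : (gaps (gappedInterval k a)).card = a := by
  rw [gaps_gappedInterval, Finset.card_image_of_injective _ (add_two_mul_injective k),
    Nat.card_Icc, Nat.add_sub_cancel]

end GappedInterval

lemma le_maxDeg {n r a b : ℕ} (har : a < r) (habr : a + b ≤ r) (hn : T r + T a + T b ≤ n) :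
    r * (r - 1) + a + b ≤ maxDeg n := by
  obtain ⟨k, rfl⟩ := Nat.exists_eq_add_of_le' har.le
  obtain ⟨t, rfl⟩ := Nat.exists_eq_add_of_le hn
  let M : Multiset ℕ := (Finset.Icc 1 b).val + Multiset.replicate t 1
  have hM : M ⊆ (gappedInterval k a).val := by
    intro x hx
    have hx' : x ∈ Finset.Icc 1 b ∨ x = 1 :=
      (Multiset.mem_add.1 hx).imp_right Multiset.eq_of_mem_replicate
    rw [Finset.mem_Icc] at hx'
    exact mem_gappedInterval.2 (Or.inl (by omega))
  have hMsum : M.sum = T b + t := by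
    rw [Multiset.sum_add, Multiset.sum_replicate, smul_eq_mul, mul_one, ← sum_Icc_one_eq_T,
      Finset.sum_val]
    rfl
  have hMcard : b ≤ M.toFinset.card := by
    have hsub : Finset.Icc 1 b ⊆ M.toFinset := fun x hx =>
      Multiset.mem_toFinset.2 (Multiset.mem_add.2 (Or.inl hx))
    simpa only [Nat.card_Icc, Nat.add_sub_cancel] using Finset.card_le_card hsub
  have hle := le_maxDeg_of_sum_add_sum_eq (zero_notMem_gappedInterval k a) hM
    (n := T (k + a) + T a + T b + t) (by rw [sum_gappedInterval, hMsum, ← add_assoc])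
  rw [card_gappedInterval, card_gaps_gappedInterval] at hle
  exact (Nat.add_le_add_left hMcard _).trans hle

/-- exact maximal degree `Δ_{T s + q} = s(s-1) + ⌊√(4q+1)⌋ - 1`. -/
theorem exact_max_degree (s q : ℕ) (hs : 1 ≤ s) (hqs : q ≤ s) :
    maxDeg (T s + q) = s * (s - 1) + (Nat.sqrt (4 * q + 1) - 1) := by
  rw [← rho_eq_sqrt_sub_one]
  apply le_antisymm
  · exact Finset.sup_le fun lam _ => deg_le hqs lam
  · obtain ⟨a, b, hab, hsum, hq⟩ := exists_add_eq_rho q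
    have habs : a + b ≤ s := (add_le_add (le_T a) (le_T b)).trans (hq.trans hqs)
    have hle : s * (s - 1) + a + b ≤ maxDeg (T s + q) := le_maxDeg (by omega) habs (by omega)
    rwa [add_assoc, hsum] at hle

end PartitionDegree
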